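/- If θ is an angle function for α, then at every point (s, v) with D := v²f(s)² + (sin θ(s) + v·g(s))² ≠ 0, the Gaussian curvature of the C-ruled surface, K = (L·N − M²)/(EG − F²), equals K = −f(s)²·sin²θ(s)/D² = −τ(s)²/D². -/

import Mathlib

open RealInnerProductSpace

/-- Cross product on `EuclideanSpace ℝ (Fin 3)`. -/
noncomputable def cross3 (u v : EuclideanSpace ℝ (Fin 3)) : EuclideanSpace ℝ (Fin 3) :=
  (EuclideanSpace.equiv (Fin 3) ℝ).symm
    (crossProduct ((EuclideanSpace.equiv (Fin 3) ℝ) u) ((EuclideanSpace.equiv (Fin 3) ℝ) v))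

/-- Determinant of the 3×3 matrix whose rows are the given vectors. -/
noncomputable def det3 (u v w : EuclideanSpace ℝ (Fin 3)) : ℝ :=
  Matrix.det (Matrix.of ![(EuclideanSpace.equiv (Fin 3) ℝ) u,
    (EuclideanSpace.equiv (Fin 3) ℝ) v, (EuclideanSpace.equiv (Fin 3) ℝ) w])

/-!
On a ruled surface `φ(s, v) = α(s) + v δ(s)` one has `φ_vv = 0`, so only `M` contributes to the
numerator of the Gaussian curvature, and `φ_s = α' + v δ'` gives
`det (φ_s, φ_v, φ_sv) = det (α', δ, δ')`. For `δ = C` everything is read off in the orthonormal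
frame `N, C, W`: there `T = -cos θ C + sin θ W` and `C' = θ' W - f N`, so the determinant is
`f sin θ = τ`, while `EG - F²` is the squared length of the component
`(sin θ + v θ') W - v f N` of `φ_s` orthogonal to the unit vector `φ_v = C`.
-/

section InnerProductSpace

variable {E : Type*} [NormedAddCommGroup E] [InnerProductSpace ℝ E]

theorem inner_eq_zero_of_hasDerivAt_of_norm_eq {u : ℝ → E} {u' : E} {s r : ℝ}
    (hu : HasDerivAt u u' s) (hr : ∀ x, ‖u x‖ = r) : ⟪u s, u'⟫ = 0 := by
  have hderiv : HasDerivAt (fun _ => r ^ 2) (2 * ⟪u s, u'⟫) s := by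
    simpa only [hr] using hu.norm_sq
  linarith [hderiv.unique (hasDerivAt_const s (r ^ 2))]

theorem norm_sq_mul_norm_sq_sub_inner_sq_of_inner_eq_zero {c p : E} (hcp : ⟪c, p⟫ = 0) (a : ℝ) :
    ‖a • c + p‖ ^ 2 * ‖c‖ ^ 2 - ⟪a • c + p, c⟫ ^ 2 = ‖p‖ ^ 2 * ‖c‖ ^ 2 := by
  have hinner : ⟪a • c + p, c⟫ = a * ‖c‖ ^ 2 := by
    rw [inner_add_left, real_inner_smul_left, real_inner_self_eq_norm_sq, real_inner_comm, hcp,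
      add_zero]
  have hnorm : ‖a • c + p‖ ^ 2 = a ^ 2 * ‖c‖ ^ 2 + ‖p‖ ^ 2 := by
    rw [norm_add_sq_real, real_inner_smul_left, hcp, norm_smul, mul_pow, Real.norm_eq_abs, sq_abs]
    ring
  rw [hinner, hnorm]
  ring

theorem orthonormal_vec3_iff {t n b : E} :
    Orthonormal ℝ ![t, n, b] ↔
      (‖t‖ = 1 ∧ ‖n‖ = 1 ∧ ‖b‖ = 1) ∧ ⟪t, n⟫ = 0 ∧ ⟪t, b⟫ = 0 ∧ ⟪n, b⟫ = 0 := by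
  simp only [orthonormal_vecCons_iff, Fin.forall_fin_succ, Matrix.cons_val_zero,
    Matrix.cons_val_succ, IsEmpty.forall_iff, Orthonormal.of_isEmpty, and_true]
  tauto

theorem orthonormal_rotate {t n b : E} (h : Orthonormal ℝ ![t, n, b]) (θ : ℝ) :
    Orthonormal ℝ ![n, -Real.cos θ • t + Real.sin θ • b, Real.sin θ • t + Real.cos θ • b] := by
  obtain ⟨⟨ht, hn, hb⟩, htn, htb, hnb⟩ := orthonormal_vec3_iff.1 h
  rw [real_inner_comm] at htn
  have hinner (x y x' y' : ℝ) : ⟪x • t + y • b, x' • t + y' • b⟫ = x * x' + y * y' := by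
    simp only [inner_add_left, inner_add_right, real_inner_smul_left, real_inner_smul_right,
      real_inner_self_eq_norm_sq, ht, hb, htb, real_inner_comm t b]
    ring
  have hn_inner (x y : ℝ) : ⟪n, x • t + y • b⟫ = 0 := by
    simp only [inner_add_right, real_inner_smul_right, htn, hnb, mul_zero, add_zero]
  refine orthonormal_vec3_iff.2 ⟨⟨hn, ?_, ?_⟩, hn_inner _ _, hn_inner _ _, ?_⟩
  · rw [norm_eq_sqrt_real_inner, hinner, Real.sqrt_eq_one]
    linarith [Real.sin_sq_add_cos_sq θ]
  · rw [norm_eq_sqrt_real_inner, hinner, Real.sqrt_eq_one]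
    linarith [Real.sin_sq_add_cos_sq θ]
  · rw [hinner]
    ring

end InnerProductSpace

section CrossProduct

open Matrix

variable (u v w : EuclideanSpace ℝ (Fin 3))

theorem inner_eq_dotProduct (u v : EuclideanSpace ℝ (Fin 3)) :
    ⟪u, v⟫ = EuclideanSpace.equiv (Fin 3) ℝ u ⬝ᵥ EuclideanSpace.equiv (Fin 3) ℝ v := by
  simp [PiLp.inner_apply, dotProduct, mul_comm]

theorem inner_self_cross3 : ⟪u, cross3 u v⟫ = 0 := by
  rw [inner_eq_dotProduct]
  exact dot_self_cross _ _

theorem inner_cross3_self : ⟪v, cross3 u v⟫ = 0 := by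
  rw [inner_eq_dotProduct]
  exact dot_cross_self _ _

theorem inner_cross3 : ⟪u, cross3 v w⟫ = det3 u v w := by
  rw [inner_eq_dotProduct]
  exact triple_product_eq_det _ _ _

theorem det3_rotate : det3 u v w = det3 v w u := by
  rw [← inner_cross3, ← inner_cross3, inner_eq_dotProduct, inner_eq_dotProduct]
  exact triple_product_permutation _ _ _

theorem det3_add_smul_left (c : ℝ) : det3 (u + c • w) v w = det3 u v w := by
  simp only [← inner_cross3]
  rw [inner_add_left, real_inner_smul_left, inner_cross3_self, mul_zero, add_zero]

theorem cross3_self : cross3 u u = 0 := by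
  simp [cross3]

theorem cross3_zero_right : cross3 u 0 = 0 := by
  simp [cross3]

theorem cross3_smul_left (c : ℝ) : cross3 (c • u) v = c • cross3 u v := by
  simp [cross3]

theorem cross3_smul_right (c : ℝ) : cross3 u (c • v) = c • cross3 u v := by
  simp [cross3]

theorem cross3_add_right : cross3 u (v + w) = cross3 u v + cross3 u w := by
  simp [cross3]

theorem cross3_anticomm : -cross3 u v = cross3 v u := by
  rw [cross3, cross3, ← map_neg, cross_anticomm]

theorem cross3_cross3 : cross3 u (cross3 v w) = ⟪u, w⟫ • v - ⟪u, v⟫ • w := by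
  apply (EuclideanSpace.equiv (Fin 3) ℝ).injective
  rw [real_inner_comm v u]
  simpa only [cross3, inner_eq_dotProduct, map_sub, map_smul,
    ContinuousLinearEquiv.apply_symm_apply] using
    cross_cross_eq_smul_sub_smul' (EuclideanSpace.equiv (Fin 3) ℝ u)
      (EuclideanSpace.equiv (Fin 3) ℝ v) (EuclideanSpace.equiv (Fin 3) ℝ w)

variable {u v w}

theorem orthonormal_cross3 (hu : ‖u‖ = 1) (hv : ‖v‖ = 1) (huv : ⟪u, v⟫ = 0) :
    Orthonormal ℝ ![u, v, cross3 u v] := by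
  have hnorm : ‖cross3 u v‖ = 1 := by
    have h := InnerProductGeometry.norm_ofLp_crossProduct u v
    rwa [InnerProductGeometry.inner_eq_zero_iff_angle_eq_pi_div_two u v |>.1 huv, hu, hv,
      Real.sin_pi_div_two, mul_one, mul_one] at h
  exact orthonormal_vec3_iff.2
    ⟨⟨hu, hv, hnorm⟩, huv, inner_self_cross3 u v, inner_cross3_self u v⟩

theorem cross3_eq_neg_inner_smul (hv : ‖v‖ = 1) (huv : ⟪u, v⟫ = 0) (hvw : ⟪v, w⟫ = 0) :
    cross3 u w = -(⟪w, cross3 u v⟫ • v) := by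
  have hparallel : cross3 v (cross3 u w) = 0 := by
    rw [cross3_cross3, hvw, real_inner_comm, huv, zero_smul, zero_smul, sub_zero]
  have hproj : cross3 u w = ⟪v, cross3 u w⟫ • v := by
    have h := cross3_cross3 v v (cross3 u w)
    rw [hparallel, cross3_zero_right, real_inner_self_eq_norm_sq, hv, one_pow, one_smul] at h
    exact (sub_eq_zero.1 h.symm).symm
  have hcoeff : ⟪v, cross3 u w⟫ = -⟪w, cross3 u v⟫ := by
    rw [← inner_neg_right, cross3_anticomm, inner_cross3, inner_cross3, det3_rotate, det3_rotate]
  rw [hproj, hcoeff, neg_smul]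

theorem hasDerivAt_cross3 {u v : ℝ → EuclideanSpace ℝ (Fin 3)} {u' v' : EuclideanSpace ℝ (Fin 3)}
    {s : ℝ} (hu : HasDerivAt u u' s) (hv : HasDerivAt v v' s) :
    HasDerivAt (fun x => cross3 (u x) (v x)) (cross3 (u s) v' + cross3 u' (v s)) s :=
  let e := (EuclideanSpace.equiv (Fin 3) ℝ).toLinearEquiv
  ((crossProduct.compl₁₂ e.toLinearMap e.toLinearMap).compr₂
    e.symm.toLinearMap).toContinuousBilinearMap.hasDerivAt_of_bilinear (fun _ => hu) fun _ => hv

end CrossProduct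

section FrenetFrame

/-- The curvature `κ` of a curve parametrized by arc length. -/
noncomputable def curvature {E : Type*} [NormedAddCommGroup E] [NormedSpace ℝ E] (α : ℝ → E)
    (s : ℝ) : ℝ :=
  ‖deriv (deriv α) s‖

/-- The principal normal `N` of a curve parametrized by arc length; it is `0` where `κ` vanishes. -/
noncomputable def principalNormal {E : Type*} [NormedAddCommGroup E] [NormedSpace ℝ E] (α : ℝ → E)
    (s : ℝ) : E :=
  (curvature α s)⁻¹ • deriv (deriv α) s

/-- The binormal `B = T × N` of a curve parametrized by arc length. -/
noncomputable def binormal (α : ℝ → EuclideanSpace ℝ (Fin 3)) (s : ℝ) : EuclideanSpace ℝ (Fin 3) :=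
  cross3 (deriv α s) (principalNormal α s)

/-- The torsion `τ = ⟨N', B⟩` of a curve parametrized by arc length. -/
noncomputable def torsion (α : ℝ → EuclideanSpace ℝ (Fin 3)) (s : ℝ) : ℝ :=
  ⟪deriv (principalNormal α) s, binormal α s⟫

section NormedSpace

variable {E : Type*} [NormedAddCommGroup E] [NormedSpace ℝ E] {α : ℝ → E} {s : ℝ}

theorem curvature_smul_principalNormal (hκ : curvature α s ≠ 0) :
    curvature α s • principalNormal α s = deriv (deriv α) s :=
  smul_inv_smul₀ hκ _

theorem differentiableAt_of_norm_deriv_eq_one (hunit : ‖deriv α s‖ = 1) :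
    DifferentiableAt ℝ α s :=
  differentiableAt_of_deriv_ne_zero (norm_ne_zero_iff.1 (hunit.trans_ne one_ne_zero))

theorem norm_principalNormal (hκ : curvature α s ≠ 0) : ‖principalNormal α s‖ = 1 := by
  rw [principalNormal, norm_smul, norm_inv, curvature, norm_norm]
  exact inv_mul_cancel₀ hκ

theorem hasDerivAt_deriv_of_curvature_ne_zero (hκ : curvature α s ≠ 0) :
    HasDerivAt (deriv α) (curvature α s • principalNormal α s) s := by
  rw [curvature_smul_principalNormal hκ]
  exact (differentiableAt_of_deriv_ne_zero (norm_ne_zero_iff.1 hκ)).hasDerivAt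

end NormedSpace

section InnerProductSpace

variable {E : Type*} [NormedAddCommGroup E] [InnerProductSpace ℝ E] {α : ℝ → E} {s : ℝ}

theorem inner_deriv_principalNormal (hunit : ∀ s, ‖deriv α s‖ = 1) (hκ : curvature α s ≠ 0) :
    ⟪deriv α s, principalNormal α s⟫ = 0 := by
  have h := inner_eq_zero_of_hasDerivAt_of_norm_eq (hasDerivAt_deriv_of_curvature_ne_zero hκ) hunit
  rw [real_inner_smul_right] at h
  exact (mul_eq_zero.1 h).resolve_left hκ

theorem differentiableAt_principalNormal (hα : DifferentiableAt ℝ (deriv (deriv α)) s)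
    (hκ : curvature α s ≠ 0) : DifferentiableAt ℝ (principalNormal α) s :=
  ((hα.norm ℝ (norm_ne_zero_iff.1 hκ)).inv hκ).smul hα

end InnerProductSpace

variable {α : ℝ → EuclideanSpace ℝ (Fin 3)} {s : ℝ}

theorem orthonormal_frenetFrame (hunit : ∀ s, ‖deriv α s‖ = 1) (hκ : curvature α s ≠ 0) :
    Orthonormal ℝ ![deriv α s, principalNormal α s, binormal α s] :=
  orthonormal_cross3 (hunit s) (norm_principalNormal hκ) (inner_deriv_principalNormal hunit hκ)

theorem hasDerivAt_binormal (hα : DifferentiableAt ℝ (deriv (deriv α)) s)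
    (hunit : ∀ s, ‖deriv α s‖ = 1) (hκ : ∀ s, curvature α s ≠ 0) :
    HasDerivAt (binormal α) (-(torsion α s • principalNormal α s)) s := by
  have hN := (differentiableAt_principalNormal hα (hκ s)).hasDerivAt
  have hNN' : ⟪principalNormal α s, deriv (principalNormal α) s⟫ = 0 :=
    inner_eq_zero_of_hasDerivAt_of_norm_eq hN fun x => norm_principalNormal (hκ x)
  refine (hasDerivAt_cross3 (hasDerivAt_deriv_of_curvature_ne_zero (hκ s)) hN).congr_deriv ?_
  rw [cross3_smul_left, cross3_self, smul_zero, add_zero]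
  exact cross3_eq_neg_inner_smul (norm_principalNormal (hκ s))
    (inner_deriv_principalNormal hunit (hκ s)) hNN'

end FrenetFrame

section AlternativeFrame

/-- The first alternative curvature `f = √(κ² + τ²)`. -/
noncomputable def altCurvature (α : ℝ → EuclideanSpace ℝ (Fin 3)) (s : ℝ) : ℝ :=
  √(curvature α s ^ 2 + torsion α s ^ 2)

/-- The vector `C = (-κT + τB) / f` of the alternative moving frame `N, C, W`. -/
noncomputable def altFrameC (α : ℝ → EuclideanSpace ℝ (Fin 3)) (s : ℝ) :
    EuclideanSpace ℝ (Fin 3) :=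
  (altCurvature α s)⁻¹ • (-curvature α s • deriv α s + torsion α s • binormal α s)

/-- The vector `W = (τT + κB) / f` of the alternative moving frame `N, C, W`. -/
noncomputable def altFrameW (α : ℝ → EuclideanSpace ℝ (Fin 3)) (s : ℝ) :
    EuclideanSpace ℝ (Fin 3) :=
  (altCurvature α s)⁻¹ • (torsion α s • deriv α s + curvature α s • binormal α s)

/-- `θ` is an angle function of `α`: the polar angle of `(κ, τ)`, chosen differentiably. The second
alternative curvature `g` is represented by `deriv θ`. -/
structure IsAngleFunction (α : ℝ → EuclideanSpace ℝ (Fin 3)) (θ : ℝ → ℝ) : Prop where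
  differentiable : Differentiable ℝ θ
  curvature_eq : ∀ s, curvature α s = altCurvature α s * Real.cos (θ s)
  torsion_eq : ∀ s, torsion α s = altCurvature α s * Real.sin (θ s)

variable {α : ℝ → EuclideanSpace ℝ (Fin 3)} {s : ℝ} {θ : ℝ → ℝ}

theorem altCurvature_ne_zero (hκ : curvature α s ≠ 0) (hθ : IsAngleFunction α θ) :
    altCurvature α s ≠ 0 :=
  left_ne_zero_of_mul (hθ.curvature_eq s ▸ hκ)

theorem altFrameC_eq (hκ : curvature α s ≠ 0) (hθ : IsAngleFunction α θ) :
    altFrameC α s = -Real.cos (θ s) • deriv α s + Real.sin (θ s) • binormal α s := by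
  rw [altFrameC, hθ.curvature_eq, hθ.torsion_eq, ← mul_neg, mul_smul, mul_smul, ← smul_add,
    inv_smul_smul₀ (altCurvature_ne_zero hκ hθ)]

theorem altFrameW_eq (hκ : curvature α s ≠ 0) (hθ : IsAngleFunction α θ) :
    altFrameW α s = Real.sin (θ s) • deriv α s + Real.cos (θ s) • binormal α s := by
  rw [altFrameW, hθ.curvature_eq, hθ.torsion_eq, mul_smul, mul_smul, ← smul_add,
    inv_smul_smul₀ (altCurvature_ne_zero hκ hθ)]

theorem orthonormal_altFrame (hunit : ∀ s, ‖deriv α s‖ = 1) (hκ : curvature α s ≠ 0)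
    (hθ : IsAngleFunction α θ) :
    Orthonormal ℝ ![principalNormal α s, altFrameC α s, altFrameW α s] := by
  rw [altFrameC_eq hκ hθ, altFrameW_eq hκ hθ]
  exact orthonormal_rotate (orthonormal_frenetFrame hunit hκ) (θ s)

theorem deriv_eq_altFrame (hκ : curvature α s ≠ 0) (hθ : IsAngleFunction α θ) :
    deriv α s = -Real.cos (θ s) • altFrameC α s + Real.sin (θ s) • altFrameW α s := by
  rw [altFrameC_eq hκ hθ, altFrameW_eq hκ hθ]
  linear_combination (norm := module) (-Real.sin_sq_add_cos_sq (θ s)) • deriv α s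

theorem cross3_deriv_altFrameC (hunit : ∀ s, ‖deriv α s‖ = 1) (hκ : curvature α s ≠ 0)
    (hθ : IsAngleFunction α θ) :
    cross3 (deriv α s) (altFrameC α s) = -(Real.sin (θ s) • principalNormal α s) := by
  have hTB : cross3 (deriv α s) (binormal α s) = -principalNormal α s := by
    rw [binormal, cross3_cross3, inner_deriv_principalNormal hunit hκ, real_inner_self_eq_norm_sq,
      hunit, one_pow, one_smul, zero_smul, zero_sub]
  rw [altFrameC_eq hκ hθ, cross3_add_right, cross3_smul_right, cross3_smul_right, cross3_self,
    hTB, smul_zero, zero_add, smul_neg]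

theorem hasDerivAt_altFrameC (hα : DifferentiableAt ℝ (deriv (deriv α)) s)
    (hunit : ∀ s, ‖deriv α s‖ = 1) (hκ : ∀ s, curvature α s ≠ 0) (hθ : IsAngleFunction α θ) :
    HasDerivAt (altFrameC α)
      (deriv θ s • altFrameW α s - altCurvature α s • principalNormal α s) s := by
  have hC : altFrameC α = fun x => -Real.cos (θ x) • deriv α x + Real.sin (θ x) • binormal α x :=
    funext fun x => altFrameC_eq (hκ x) hθ
  have hT := hasDerivAt_deriv_of_curvature_ne_zero (hκ s)
  have hB := hasDerivAt_binormal hα hunit hκ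
  rw [hC, altFrameW_eq (hκ s) hθ]
  refine (((hθ.differentiable s).hasDerivAt.cos.fun_neg.fun_smul hT).fun_add
    ((hθ.differentiable s).hasDerivAt.sin.fun_smul hB)).congr_deriv ?_
  rw [hθ.curvature_eq s, hθ.torsion_eq s]
  linear_combination (norm := module)
    (-altCurvature α s * Real.sin_sq_add_cos_sq (θ s)) • principalNormal α s

end AlternativeFrame

section RuledSurface

section NormedSpace

variable {E : Type*} [NormedAddCommGroup E] [NormedSpace ℝ E]

/-- The partial derivative `φ_s` of a parametrized surface `φ(s, v)`. -/
noncomputable def partialS (φ : ℝ → ℝ → E) (s v : ℝ) : E :=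
  deriv (fun u => φ u v) s

/-- The partial derivative `φ_v` of a parametrized surface `φ(s, v)`. -/
noncomputable def partialV (φ : ℝ → ℝ → E) (s v : ℝ) : E :=
  deriv (fun w => φ s w) v

/-- The ruled surface with base curve `α` and director curve `δ`. -/
def ruledSurface (α δ : ℝ → E) (s v : ℝ) : E :=
  α s + v • δ s

theorem partialS_ruledSurface {α δ : ℝ → E} {s : ℝ} (hα : DifferentiableAt ℝ α s)
    (hδ : DifferentiableAt ℝ δ s) (v : ℝ) :
    partialS (ruledSurface α δ) s v = deriv α s + v • deriv δ s :=
  (hα.hasDerivAt.fun_add (hδ.hasDerivAt.fun_const_smul v)).deriv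

theorem partialV_ruledSurface (α δ : ℝ → E) : partialV (ruledSurface α δ) = fun s _ => δ s := by
  funext s v
  exact (((hasDerivAt_id v).smul_const (δ s)).const_add (α s)).deriv.trans (one_smul ℝ _)

end NormedSpace

/-- The discriminant `EG - F²` of the first fundamental form of a parametrized surface. -/
noncomputable def firstFormDet {E : Type*} [NormedAddCommGroup E] [InnerProductSpace ℝ E]
    (φ : ℝ → ℝ → E) (s v : ℝ) : ℝ :=
  ‖partialS φ s v‖ ^ 2 * ‖partialV φ s v‖ ^ 2 - ⟪partialS φ s v, partialV φ s v⟫ ^ 2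

/-- The component of `x` along the unit normal `φ_s × φ_v / √(EG - F²)` of a parametrized surface;
for `x` a second partial derivative of `φ` it is a coefficient of the second fundamental form. -/
noncomputable def normalComponent (φ : ℝ → ℝ → EuclideanSpace ℝ (Fin 3)) (s v : ℝ)
    (x : EuclideanSpace ℝ (Fin 3)) : ℝ :=
  det3 (partialS φ s v) (partialV φ s v) x / √(firstFormDet φ s v)

/-- The Gaussian curvature `(LN - M²) / (EG - F²)` of a parametrized surface, meaningful at the
points where `EG - F² ≠ 0`. -/
noncomputable def gaussianCurvature (φ : ℝ → ℝ → EuclideanSpace ℝ (Fin 3)) (s v : ℝ) : ℝ :=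
  (normalComponent φ s v (partialS (partialS φ) s v) *
      normalComponent φ s v (partialV (partialV φ) s v) -
    normalComponent φ s v (partialS (partialV φ) s v) ^ 2) / firstFormDet φ s v

/-- A junk value of `φ_ss` is harmless here: it enters `L` only, and `L` is multiplied by
`N = 0`. -/
theorem gaussianCurvature_ruledSurface {α δ : ℝ → EuclideanSpace ℝ (Fin 3)} {s v : ℝ}
    (hα : DifferentiableAt ℝ α s) (hδ : DifferentiableAt ℝ δ s)
    (hreg : 0 < firstFormDet (ruledSurface α δ) s v) :
    gaussianCurvature (ruledSurface α δ) s v =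
      -det3 (deriv α s) (δ s) (deriv δ s) ^ 2 / firstFormDet (ruledSurface α δ) s v ^ 2 := by
  have hN : normalComponent (ruledSurface α δ) s v
      (partialV (partialV (ruledSurface α δ)) s v) = 0 := by
    rw [partialV_ruledSurface α δ, partialV, deriv_const, normalComponent, ← inner_cross3,
      cross3_zero_right, inner_zero_right, zero_div]
  have hM : normalComponent (ruledSurface α δ) s v (partialS (partialV (ruledSurface α δ)) s v) =
      det3 (deriv α s) (δ s) (deriv δ s) / √(firstFormDet (ruledSurface α δ) s v) := by
    rw [normalComponent, partialS_ruledSurface hα hδ, partialV_ruledSurface α δ, partialS,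
      det3_add_smul_left]
  rw [gaussianCurvature, hN, hM, mul_zero, zero_sub, div_pow, Real.sq_sqrt hreg.le]
  field_simp

end RuledSurface

section CRuledSurface

variable {α : ℝ → EuclideanSpace ℝ (Fin 3)} {s : ℝ} {θ : ℝ → ℝ}

theorem firstFormDet_ruledSurface_altFrameC (hα : DifferentiableAt ℝ (deriv (deriv α)) s)
    (hunit : ∀ s, ‖deriv α s‖ = 1) (hκ : ∀ s, curvature α s ≠ 0) (hθ : IsAngleFunction α θ)
    (v : ℝ) :
    firstFormDet (ruledSurface α (altFrameC α)) s v =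
      v ^ 2 * altCurvature α s ^ 2 + (Real.sin (θ s) + v * deriv θ s) ^ 2 := by
  obtain ⟨⟨hN, hC, hW⟩, hNC, hNW, hCW⟩ :=
    orthonormal_vec3_iff.1 (orthonormal_altFrame hunit (hκ s) hθ)
  rw [real_inner_comm] at hNC hNW
  have hC' := hasDerivAt_altFrameC hα hunit hκ hθ
  set p := (Real.sin (θ s) + v * deriv θ s) • altFrameW α s -
    (v * altCurvature α s) • principalNormal α s with hp
  have hφs : partialS (ruledSurface α (altFrameC α)) s v =
      -Real.cos (θ s) • altFrameC α s + p := by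
    rw [partialS_ruledSurface (differentiableAt_of_norm_deriv_eq_one (hunit s))
      hC'.differentiableAt, hC'.deriv, deriv_eq_altFrame (hκ s) hθ]
    module
  have hCp : ⟪altFrameC α s, p⟫ = 0 := by
    rw [hp, inner_sub_right, real_inner_smul_right, real_inner_smul_right, hCW, hNC]
    ring
  rw [firstFormDet, hφs, partialV_ruledSurface,
    norm_sq_mul_norm_sq_sub_inner_sq_of_inner_eq_zero hCp, hC, hp, norm_sub_sq_real]
  simp only [norm_smul, real_inner_smul_left, real_inner_smul_right, hNW, hN, hW, mul_pow,
    Real.norm_eq_abs, sq_abs]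
  ring

theorem det3_ruledSurface_altFrameC (hα : DifferentiableAt ℝ (deriv (deriv α)) s)
    (hunit : ∀ s, ‖deriv α s‖ = 1) (hκ : ∀ s, curvature α s ≠ 0) (hθ : IsAngleFunction α θ) :
    det3 (deriv α s) (altFrameC α s) (deriv (altFrameC α) s) = torsion α s := by
  obtain ⟨⟨hN, -, -⟩, -, hNW, -⟩ :=
    orthonormal_vec3_iff.1 (orthonormal_altFrame hunit (hκ s) hθ)
  rw [(hasDerivAt_altFrameC hα hunit hκ hθ).deriv, ← det3_rotate, ← inner_cross3,
    cross3_deriv_altFrameC hunit (hκ s) hθ, hθ.torsion_eq s, inner_neg_right, inner_sub_left]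
  simp only [real_inner_smul_right, real_inner_comm, hNW, real_inner_self_eq_norm_sq, hN]
  ring

theorem stmt_12_general (hα : DifferentiableAt ℝ (deriv (deriv α)) s)
    (hunit : ∀ s, ‖deriv α s‖ = 1) (hκ : ∀ s, curvature α s ≠ 0) (hθ : IsAngleFunction α θ)
    {v : ℝ}
    (hD : v ^ 2 * altCurvature α s ^ 2 + (Real.sin (θ s) + v * deriv θ s) ^ 2 ≠ 0) :
    gaussianCurvature (ruledSurface α (altFrameC α)) s v =
      -torsion α s ^ 2 /
        (v ^ 2 * altCurvature α s ^ 2 + (Real.sin (θ s) + v * deriv θ s) ^ 2) ^ 2 := by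
  have hdet := firstFormDet_ruledSurface_altFrameC hα hunit hκ hθ v
  have hreg : 0 < firstFormDet (ruledSurface α (altFrameC α)) s v := by
    rw [hdet]
    positivity
  rw [gaussianCurvature_ruledSurface (differentiableAt_of_norm_deriv_eq_one (hunit s))
    (hasDerivAt_altFrameC hα hunit hκ hθ).differentiableAt hreg, hdet,
    det3_ruledSurface_altFrameC hα hunit hκ hθ]

end CRuledSurface

theorem stmt_12
    (α : ℝ → EuclideanSpace ℝ (Fin 3))
    (hα : ContDiff ℝ (⊤ : ℕ∞) α)
    (hunit : ∀ s, ‖deriv α s‖ = 1)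
    (T : ℝ → EuclideanSpace ℝ (Fin 3)) (hT : ∀ s, T s = deriv α s)
    (κ : ℝ → ℝ) (hκ : ∀ s, κ s = ‖deriv (deriv α) s‖) (hκpos : ∀ s, 0 < κ s)
    (N : ℝ → EuclideanSpace ℝ (Fin 3)) (hN : ∀ s, N s = (κ s)⁻¹ • deriv (deriv α) s)
    (B : ℝ → EuclideanSpace ℝ (Fin 3)) (hB : ∀ s, B s = cross3 (T s) (N s))
    (τ : ℝ → ℝ) (hτ : ∀ s, τ s = ⟪deriv N s, B s⟫)
    (f : ℝ → ℝ) (hf : ∀ s, f s = Real.sqrt (κ s ^ 2 + τ s ^ 2))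
    (g : ℝ → ℝ) (hg : ∀ s, g s = κ s ^ 2 / (κ s ^ 2 + τ s ^ 2) * deriv (fun u => τ u / κ u) s)
    (C : ℝ → EuclideanSpace ℝ (Fin 3))
    (hC : ∀ s, C s = (Real.sqrt (κ s ^ 2 + τ s ^ 2))⁻¹ • ((-κ s) • T s + τ s • B s))
    (W : ℝ → EuclideanSpace ℝ (Fin 3))
    (hW : ∀ s, W s = (Real.sqrt (κ s ^ 2 + τ s ^ 2))⁻¹ • (τ s • T s + κ s • B s))
    (θ : ℝ → ℝ) (hθdiff : Differentiable ℝ θ)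
    (hθderiv : ∀ s, deriv θ s = g s)
    (hθκ : ∀ s, κ s = f s * Real.cos (θ s))
    (hθτ : ∀ s, τ s = f s * Real.sin (θ s))
    (φs φv : ℝ → ℝ → EuclideanSpace ℝ (Fin 3))
    (hφs : ∀ s v, φs s v = deriv (fun u => α u + v • C u) s)
    (hφv : ∀ s v, φv s v = deriv (fun w => α s + w • C s) v)
    (φss φsv φvv : ℝ → ℝ → EuclideanSpace ℝ (Fin 3))
    (hφss : ∀ s v, φss s v = deriv (fun u => φs u v) s)
    (hφsv : ∀ s v, φsv s v = deriv (fun u => φv u v) s)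
    (hφvv : ∀ s v, φvv s v = deriv (fun w => φv s w) v)
    (EE FF GG LL MM NN : ℝ → ℝ → ℝ)
    (hEE : ∀ s v, EE s v = ‖φs s v‖ ^ 2)
    (hFF : ∀ s v, FF s v = ⟪φs s v, φv s v⟫)
    (hGG : ∀ s v, GG s v = ‖φv s v‖ ^ 2)
    (hLL : ∀ s v, LL s v =
      det3 (φs s v) (φv s v) (φss s v) / Real.sqrt (EE s v * GG s v - FF s v ^ 2))
    (hMM : ∀ s v, MM s v =
      det3 (φs s v) (φv s v) (φsv s v) / Real.sqrt (EE s v * GG s v - FF s v ^ 2))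
    (hNN : ∀ s v, NN s v =
      det3 (φs s v) (φv s v) (φvv s v) / Real.sqrt (EE s v * GG s v - FF s v ^ 2)) :
    ∀ (s v : ℝ),
      v ^ 2 * f s ^ 2 + (Real.sin (θ s) + v * g s) ^ 2 ≠ 0 →
      (LL s v * NN s v - MM s v ^ 2) / (EE s v * GG s v - FF s v ^ 2) =
        -(f s ^ 2 * Real.sin (θ s) ^ 2) /
          (v ^ 2 * f s ^ 2 + (Real.sin (θ s) + v * g s) ^ 2) ^ 2 ∧
      (LL s v * NN s v - MM s v ^ 2) / (EE s v * GG s v - FF s v ^ 2) =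
        -(τ s ^ 2) / (v ^ 2 * f s ^ 2 + (Real.sin (θ s) + v * g s) ^ 2) ^ 2 := by
  have hα'' : ContDiff ℝ (⊤ : ℕ∞) (deriv (deriv α)) := hα.iterate_deriv 2
  obtain rfl : T = deriv α := funext hT
  obtain rfl : κ = curvature α := funext hκ
  obtain rfl : N = principalNormal α := funext hN
  obtain rfl : B = binormal α := funext hB
  obtain rfl : τ = torsion α := funext hτ
  obtain rfl : f = altCurvature α := funext hf
  obtain rfl : C = altFrameC α := funext hC
  obtain rfl : g = deriv θ := (funext hθderiv).symm
  obtain rfl : φs = partialS (ruledSurface α (altFrameC α)) := funext₂ hφs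
  obtain rfl : φv = partialV (ruledSurface α (altFrameC α)) := funext₂ hφv
  intro s v hD
  have hK := stmt_12_general (hα''.differentiable (by simp) s) hunit (fun s => (hκpos s).ne')
    ⟨hθdiff, hθκ, hθτ⟩ hD
  simp only [gaussianCurvature, normalComponent, firstFormDet, partialS, partialV] at hK
  simp only [hLL, hMM, hNN, hEE, hFF, hGG, hφss, hφsv, hφvv, partialS, partialV, hK, hθτ s, mul_pow,
    and_self]
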